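/- Let G be a group and H a normal subgroup of G which is finitely generated and residually finite. Let H₁ be an abelian characteristic subgroup of finite index in H, and let Z be the centralizer of H₁ in H. Then G has a normal subgroup G' of finite index in G such that G' ∩ H is contained in Z·H₁ and, moreover, for all x, y ∈ G' ∩ (Z·H₁), the commutator [x,y] = x y x⁻¹ y⁻¹ lies in G' ∩ H₁ (equivalently, the quotient group (G' ∩ Z·H₁)/(G' ∩ H₁) is abelian). -/

import Mathlib

/-!
In a finitely generated group `H` every finite-index subgroup contains a characteristic one `K` of
finite index. If `H` is normal in `G`, then `K` is normal in `G` and the elements of `G` acting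
trivially by conjugation on the finite group `H ⧸ K` form a normal subgroup `G'` of finite index
with `⁅G', H⁆ ≤ K`. So it suffices to find a finite-index `N ≤ H` such that an element of `H`
whose commutators with `H₁` all lie in `N` centralizes `H₁`, and to choose `K ≤ N ⊓ H₁`.

Residual finiteness gives such a subgroup for a single element `h`. As `H₁` is abelian, `⁅h, a⁆`
with `a ∈ H₁` depends only on the coset `h H₁`, so the intersection over representatives of the
finitely many cosets works for all `h` at once.
-/

open Subgroup
open scoped commutatorElement

theorem finite_monoidHom_of_fg (M N : Type*) [Monoid M] [Monoid N] [Monoid.FG M] [Finite N] :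
    Finite (M →* N) := by
  obtain ⟨S, hS⟩ := Monoid.FG.fg_top (M := M)
  refine Finite.of_injective (fun (f : M →* N) (s : S) => f s) fun f g hfg => ?_
  exact MonoidHom.eq_of_eqOn_denseM hS fun s hs => congrFun hfg ⟨s, hs⟩

theorem characteristic_iInf_ker (G Q : Type*) [Group G] [Group Q] :
    (⨅ f : G →* Q, f.ker).Characteristic := by
  refine characteristic_iff_le_comap.mpr fun φ g hg => ?_
  simp only [mem_comap, mem_iInf, MonoidHom.mem_ker] at hg ⊢
  exact fun f => hg (f.comp φ.toMonoidHom)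

section

variable {G : Type*} [Group G]

theorem exists_characteristic_finiteIndex_le [Group.FG G] (N : Subgroup G) [N.FiniteIndex] :
    ∃ K ≤ N, K.Characteristic ∧ K.FiniteIndex := by
  have : Finite (G →* Equiv.Perm (G ⧸ N)) := finite_monoidHom_of_fg _ _
  refine ⟨⨅ f : G →* Equiv.Perm (G ⧸ N), f.ker, ?_, characteristic_iInf_ker _ _,
    finiteIndex_iInf fun f => finiteIndex_ker f⟩
  calc ⨅ f : G →* Equiv.Perm (G ⧸ N), f.ker
      ≤ (MulAction.toPermHom G (G ⧸ N)).ker := iInf_le _ _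
    _ = N.normalCore := N.normalCore_eq_ker.symm
    _ ≤ N := N.normalCore_le

theorem finiteIndex_centralizer_of_finite_of_normal (H : Subgroup G) [H.Normal] [Finite H] :
    (centralizer (H : Set G)).FiniteIndex := by
  have : Finite (MulAut H) := Finite.of_injective _ DFunLike.coe_injective
  have ker_le : (MulAut.conjNormal (H := H)).ker ≤ centralizer (H : Set G) := by
    refine fun g hg => mem_centralizer_iff.mpr fun h hh => ?_
    have conj_eq : g * h * g⁻¹ = h := congr(($(MonoidHom.mem_ker.mp hg) ⟨h, hh⟩ : G))
    exact (mul_inv_eq_iff_eq_mul.mp conj_eq).symm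
  exact finiteIndex_of_le ker_le

theorem finite_map_of_isFiniteRelIndex_ker {G' : Type*} [Group G'] (f : G →* G')
    (H : Subgroup G) [f.ker.IsFiniteRelIndex H] : Finite (H.map f) :=
  Nat.finite_of_card_ne_zero (relIndex_ker H f ▸ relIndex_ne_zero)

theorem exists_normal_finiteIndex_commutator_le_map (H : Subgroup G) [H.Normal] [Group.FG H]
    (N : Subgroup H) [N.FiniteIndex] :
    ∃ G' : Subgroup G, G'.Normal ∧ G'.FiniteIndex ∧ ⁅G', H⁆ ≤ N.map H.subtype := by
  obtain ⟨K, hKN, _, _⟩ := exists_characteristic_finiteIndex_le N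
  let π := QuotientGroup.mk' (K.map H.subtype)
  have ker_π : π.ker = K.map H.subtype := QuotientGroup.ker_mk' _
  have hπ : Function.Surjective π := QuotientGroup.mk'_surjective _
  have : (H.map π).Normal := Normal.map ‹_› π hπ
  have : π.ker.IsFiniteRelIndex H := by
    rwa [isFiniteRelIndex_iff_finiteIndex, ker_π, ← comap_subtype,
      comap_map_eq_self_of_injective H.subtype_injective]
  have : Finite (H.map π) := finite_map_of_isFiniteRelIndex_ker π H
  let C := centralizer (H.map π : Set (G ⧸ K.map H.subtype))
  have : C.FiniteIndex := finiteIndex_centralizer_of_finite_of_normal _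
  have commutator_le_ker : ⁅C.comap π, H⁆ ≤ π.ker := by
    rw [← Subgroup.map_eq_bot_iff, map_commutator, commutator_eq_bot_iff_le_centralizer]
    exact map_comap_le π C
  refine ⟨C.comap π, inferInstance, ⟨?_⟩, ?_⟩
  · rw [index_comap_of_surjective C hπ]
    exact FiniteIndex.index_ne_zero
  · exact commutator_le_ker.trans (ker_π.trans_le (map_mono hKN))

variable [Group.ResiduallyFinite G]

theorem exists_finiteIndex_mem_centralizer_of_commutator_mem (s : Set G) (g : G) :
    ∃ N : Subgroup G, N.FiniteIndex ∧ ((∀ a ∈ s, ⁅g, a⁆ ∈ N) → g ∈ centralizer s) := by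
  by_cases hg : ∀ a ∈ s, ⁅g, a⁆ = 1
  · refine ⟨⊤, inferInstance, fun _ => mem_centralizer_iff.mpr fun a ha => ?_⟩
    exact (commutatorElement_eq_one_iff_mul_comm.mp (hg a ha)).symm
  · push Not at hg
    obtain ⟨a, ha, hne⟩ := hg
    obtain ⟨N, hN, hmem⟩ := Group.residuallyFinite_iff_exists_finiteIndex.mp ‹_› _ hne
    exact ⟨N, hN, fun h => absurd (h a ha) hmem⟩

theorem exists_finiteIndex_forall_mem_centralizer_of_commutator_mem (A : Subgroup G)
    [A.FiniteIndex] [IsMulCommutative A] :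
    ∃ N : Subgroup G, N.FiniteIndex ∧
      ∀ g, (∀ a ∈ A, ⁅g, a⁆ ∈ N) → g ∈ centralizer (A : Set G) := by
  choose N hNfin hN using exists_finiteIndex_mem_centralizer_of_commutator_mem (A : Set G)
  refine ⟨⨅ q : G ⧸ A, N q.out, finiteIndex_iInf fun q => hNfin _, fun g hg => ?_⟩
  obtain ⟨b, out_eq⟩ := QuotientGroup.mk_out_eq_mul A g
  have hb : (b : G) ∈ centralizer (A : Set G) := A.le_centralizer b.2
  have commutator_out_eq : ∀ a ∈ A, ⁅(g : G ⧸ A).out, a⁆ = ⁅g, a⁆ := fun a ha => by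
    have : ⁅(b : G), a⁆ = 1 := commutatorElement_eq_one_iff_mul_comm.mpr (hb a ha).symm
    rw [out_eq, commutatorElement_mul_left_eq_conj_mul, this, mul_one, mul_inv_cancel, one_mul]
  have out_mem : (g : G ⧸ A).out ∈ centralizer (A : Set G) :=
    hN _ fun a ha => commutator_out_eq a ha ▸ mem_iInf.mp (hg a ha) g
  exact (mul_mem_cancel_right hb).mp (out_eq ▸ out_mem)

end

theorem stmt1_general (G : Type*) [Group G] (H : Subgroup G) [H.Normal]
    (hFG : Group.FG H)
    (hRF : ∀ h : H, h ≠ 1 → ∃ N : Subgroup H, N.Normal ∧ N.FiniteIndex ∧ h ∉ N)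
    (H₁ : Subgroup H) [H₁.FiniteIndex]
    (hab : ∀ x ∈ H₁, ∀ y ∈ H₁, x * y = y * x) :
    ∃ G' : Subgroup G, G'.Normal ∧ G'.FiniteIndex ∧
      G' ⊓ H ≤ (Subgroup.centralizer (H₁ : Set H) ⊔ H₁).map H.subtype ∧
      ∀ x ∈ G' ⊓ (Subgroup.centralizer (H₁ : Set H) ⊔ H₁).map H.subtype,
        ∀ y ∈ G' ⊓ (Subgroup.centralizer (H₁ : Set H) ⊔ H₁).map H.subtype,
          x * y * x⁻¹ * y⁻¹ ∈ G' ⊓ H₁.map H.subtype := by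
  have : Group.ResiduallyFinite H := Group.residuallyFinite_iff_exists_finiteIndex.mpr
    fun h hh => (hRF h hh).imp fun _ hN => hN.2
  have : IsMulCommutative H₁ := ⟨⟨fun x y => Subtype.ext (hab x x.2 y y.2)⟩⟩
  obtain ⟨N, _, hN⟩ := exists_finiteIndex_forall_mem_centralizer_of_commutator_mem H₁
  obtain ⟨G', hnormal, hfin, hG'⟩ := exists_normal_finiteIndex_commutator_le_map H (N ⊓ H₁)
  refine ⟨G', hnormal, hfin, ?_, ?_⟩
  · rintro x ⟨hx, hxH⟩
    lift x to H using hxH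
    have commutator_mem (a : H) : ⁅x, a⁆ ∈ N ⊓ H₁ :=
      (mem_map_iff_mem H.subtype_injective).mp (hG' (commutator_mem_commutator hx a.2))
    exact mem_map_of_mem _ (mem_sup_left (hN x fun a _ => (commutator_mem a).1))
  · rintro x ⟨hx, -⟩ y ⟨hy, hyH⟩
    exact ⟨G'.mul_mem (G'.mul_mem (G'.mul_mem hx hy) (G'.inv_mem hx)) (G'.inv_mem hy),
      map_mono inf_le_right (hG' (commutator_mem_commutator hx (map_subtype_le _ hyH)))⟩

/-- Proposition 3.3.0(1), second assertion: in the setting of the first assertion,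
`G'` may moreover be chosen so that all commutators of elements of `G' ∩ (Z·H₁)`
lie in `G' ∩ H₁`, i.e. the quotient `(G' ∩ Z·H₁)/(G' ∩ H₁)` is abelian. -/
theorem stmt1 (G : Type*) [Group G] (H : Subgroup G) [H.Normal]
    (hFG : Group.FG H)
    (hRF : ∀ h : H, h ≠ 1 → ∃ N : Subgroup H, N.Normal ∧ N.FiniteIndex ∧ h ∉ N)
    (H₁ : Subgroup H) [H₁.Characteristic] [H₁.FiniteIndex]
    (hab : ∀ x ∈ H₁, ∀ y ∈ H₁, x * y = y * x) :
    ∃ G' : Subgroup G, G'.Normal ∧ G'.FiniteIndex ∧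
      G' ⊓ H ≤ (Subgroup.centralizer (H₁ : Set H) ⊔ H₁).map H.subtype ∧
      ∀ x ∈ G' ⊓ (Subgroup.centralizer (H₁ : Set H) ⊔ H₁).map H.subtype,
        ∀ y ∈ G' ⊓ (Subgroup.centralizer (H₁ : Set H) ⊔ H₁).map H.subtype,
          x * y * x⁻¹ * y⁻¹ ∈ G' ⊓ H₁.map H.subtype :=
  stmt1_general G H hFG hRF H₁ hab
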